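/- For every oriented tree-structure Φ, the k-linear map on T_or(Φ) defined by (T,s) ↦ Σ_{e ∈ E(T)} ((T_e^1, s|_{T_e^1}) ⊗ (T_e^2, s|_{T_e^2}) − (T_e^2, s|_{T_e^2}) ⊗ (T_e^1, s|_{T_e^1})) is a Lie cobracket on T_or(Φ). -/

import Mathlib

/-!
Statement 4: for every oriented tree-structure `Φ`, the map
`(T,s) ↦ Σ_{e ∈ E(T)} ((T_e^1, s|) ⊗ (T_e^2, s|) − (T_e^2, s|) ⊗ (T_e^1, s|))` (where
`T_e^2` is the component of `T ∖ {e}` that `e` points to and `T_e^1` the other one) is a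
Lie cobracket on `T_or(Φ)`, the free `k`-module on isomorphism classes of pairs `(T,s)`
with `T` an oriented tree and `s ∈ Φ(T)`.
-/

universe u

open TensorProduct

noncomputable section

section LieCoalg

variable (k : Type*) [CommRing k] (g : Type*) [AddCommGroup g] [Module k g]

/-- `τ_{(12)}` on `g ⊗ g`. -/
def tau2 : g ⊗[k] g →ₗ[k] g ⊗[k] g := (TensorProduct.comm k g g).toLinearMap

/-- `τ_{(132)}` on the triple tensor product `g ⊗ (g ⊗ g)`: `x⊗y⊗z ↦ y⊗z⊗x`. -/
def tau132 : g ⊗[k] (g ⊗[k] g) →ₗ[k] g ⊗[k] (g ⊗[k] g) :=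
  (TensorProduct.assoc k g g g).toLinearMap ∘ₗ
    (TensorProduct.comm k g (g ⊗[k] g)).toLinearMap

/-- `τ_{(123)}` on the triple tensor product: `x⊗y⊗z ↦ z⊗x⊗y`. -/
def tau123 : g ⊗[k] (g ⊗[k] g) →ₗ[k] g ⊗[k] (g ⊗[k] g) :=
  tau132 k g ∘ₗ tau132 k g

variable {k g}

/-- `(δ ⊗ Id) ∘ δ : g → g ⊗ g ⊗ g` (triple tensor product associated as `g ⊗ (g ⊗ g)`). -/
def leftIter (δ : g →ₗ[k] g ⊗[k] g) : g →ₗ[k] g ⊗[k] (g ⊗[k] g) :=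
  ((TensorProduct.assoc k g g g).toLinearMap ∘ₗ LinearMap.rTensor g δ) ∘ₗ δ

/-- `δ : g → g ⊗ g` is a Lie cobracket if `τ_{(12)} ∘ δ = −δ` and
`(Id + τ_{(123)} + τ_{(132)}) ∘ (δ ⊗ Id) ∘ δ = 0` (co-Jacobi identity). -/
def IsLieCobracket (δ : g →ₗ[k] g ⊗[k] g) : Prop :=
  (tau2 k g) ∘ₗ δ = -δ ∧
  (LinearMap.id + tau123 k g + tau132 k g) ∘ₗ leftIter δ = 0

end LieCoalg

/-! ### Oriented trees

Oriented trees are represented by planar rooted trees whose edges carry a `Bool`: the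
flag of an edge is `true` exactly when the edge is oriented away from the root side (the
auxiliary root and planar data are immaterial for the notions below, which only concern
the underlying oriented tree).  Vertices are addressed by lists of child-indices, and an
edge is identified with the address of its endpoint farther from the (auxiliary) root. -/

/-- Planar rooted representations of oriented trees. -/
inductive OTree : Type
  | node : List (Bool × OTree) → OTree

/-- `IsVtxO a T`: the address `a` is a vertex of `T`. -/
def IsVtxO : List ℕ → OTree → Prop
  | [], _ => True
  | i :: a, .node l => ∃ u, l[i]? = some u ∧ IsVtxO a u.2

mutual
/-- The list of all vertex addresses. -/
def vtxListO : OTree → List (List ℕ)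
  | .node l => [] :: vtxListOL 0 l
/-- Auxiliary to `vtxListO`. -/
def vtxListOL : ℕ → List (Bool × OTree) → List (List ℕ)
  | _, [] => []
  | i, (_, u) :: ts => (vtxListO u).map (i :: ·) ++ vtxListOL (i+1) ts
end

/-- The edges, identified with the non-root vertices. -/
def edgeListO (T : OTree) : List (List ℕ) := (vtxListO T).filter (· ≠ [])

/-- The orientation flag of the edge above the vertex `a`. -/
def flagAtO : List ℕ → OTree → Option Bool
  | [], _ => none
  | [i], .node l => (l[i]?).map Prod.fst
  | i :: j :: a, .node l => match l[i]? with
    | some u => flagAtO (j :: a) u.2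
    | none => none

/-- The subtree at the vertex `a`. -/
def subAtO : List ℕ → OTree → Option OTree
  | [], u => some u
  | i :: a, .node l => match l[i]? with
    | some u => subAtO a u.2
    | none => none

/-- The tree with the subtree at the (non-root) vertex `a` removed. -/
def pruneO : List ℕ → OTree → OTree
  | [], u => u
  | [i], .node l => .node (l.eraseIdx i)
  | i :: j :: a, .node l => match l[i]? with
    | some u => .node (l.set i (u.1, pruneO (j :: a) u.2))
    | none => .node l

/-- The canonical embedding of the vertices of `pruneO a T` into the vertices of `T`. -/
def pruneEmbO (a : List ℕ) (b : List ℕ) : List ℕ :=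
  match a.getLast? with
  | none => b
  | some i =>
      let a' := a.dropLast
      if a'.isPrefixOf b then
        match b.drop a'.length with
        | [] => b
        | j :: rest => if i ≤ j then a' ++ (j+1) :: rest else b
      else b

/-- `DirEdge T x y`: the vertices `x, y` of `T` are joined by an edge oriented from `x`
to `y`. -/
def DirEdge (T : OTree) (x y : List ℕ) : Prop :=
  (∃ j, y = x ++ [j] ∧ flagAtO y T = some true) ∨
  (∃ j, x = y ++ [j] ∧ flagAtO x T = some false)

/-- An (orientation-preserving) embedding of oriented trees `T → T'`, given as a map on
vertex addresses: injective on vertices and sending each oriented edge to an oriented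
edge. -/
def IsOEmbedding (T T' : OTree) (f : List ℕ → List ℕ) : Prop :=
  (∀ a, IsVtxO a T → IsVtxO (f a) T') ∧
  (∀ a b, IsVtxO a T → IsVtxO b T → f a = f b → a = b) ∧
  (∀ a i, IsVtxO (a ++ [i]) T →
    ((flagAtO (a ++ [i]) T = some true ∧ DirEdge T' (f a) (f (a ++ [i]))) ∨
     (flagAtO (a ++ [i]) T = some false ∧ DirEdge T' (f (a ++ [i])) (f a))))

/-- An oriented tree-structure: a contravariant functor from the category of oriented
trees and orientation-preserving embeddings to sets. -/
structure OTreeStructure : Type (u + 1) where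
  /-- The set attached to each oriented tree. -/
  F : OTree → Type u
  /-- Restriction along an embedding. -/
  res : ∀ {T T' : OTree} (f : List ℕ → List ℕ), IsOEmbedding T T' f → F T' → F T
  res_id : ∀ (T : OTree) (h : IsOEmbedding T T id) (x : F T), res id h x = x
  res_comp : ∀ {T T' T'' : OTree} (f g : List ℕ → List ℕ)
      (hf : IsOEmbedding T T' f) (hg : IsOEmbedding T' T'' g)
      (hgf : IsOEmbedding T T'' (g ∘ f)) (x : F T''),
      res (g ∘ f) hgf x = res f hf (res g hg x)

/-- Pairs `(T, s)` with `T` an oriented tree and `s ∈ Φ(T)`. -/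
def OTS (Φ : OTreeStructure.{u}) : Type u := Σ T : OTree, Φ.F T

/-- Isomorphism of pairs: an isomorphism of oriented trees (a surjective embedding,
which may move the auxiliary root) whose pullback carries the structure of one pair to
that of the other. -/
def pairRelO (Φ : OTreeStructure.{u}) (x y : OTS Φ) : Prop :=
  ∃ (f : List ℕ → List ℕ) (h : IsOEmbedding x.1 y.1 f),
    (∀ b, IsVtxO b y.1 → ∃ a, IsVtxO a x.1 ∧ f a = b) ∧ Φ.res f h y.2 = x.2

/-- Isomorphism classes of pairs `(T, s)`. -/
def OTSIso (Φ : OTreeStructure.{u}) : Type u := Quot (pairRelO Φ)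

open scoped Classical

/-- The sum of a list of elements of an additive commutative monoid. -/
def lsum {M : Type*} [AddCommMonoid M] (l : List M) : M := l.foldr (· + ·) 0

/-- The zero element of a tensor product. -/
def tzero (k : Type*) [CommRing k] (M N : Type*) [AddCommGroup M] [Module k M]
    [AddCommGroup N] [Module k N] : M ⊗[k] N := 0

variable (k : Type*) [CommRing k] (Φ : OTreeStructure.{u})

/-- `T_or(Φ)`: the free `k`-module on the isomorphism classes of pairs `(T,s)`. -/
abbrev TorS := OTSIso Φ →₀ k

/-- The summand corresponding to the edge `e` of the pair `(T,s)`: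
`(T_e^1, s|) ⊗ (T_e^2, s|) − (T_e^2, s|) ⊗ (T_e^1, s|)`, where `T_e^2` is the component
of `T ∖ {e}` that `e` points to. -/
def rhoOSTerm (p : OTS Φ) (e : List ℕ) : TorS k Φ ⊗[k] TorS k Φ :=
  match subAtO e p.1 with
  | some A =>
      let B := pruneO e p.1
      if h : IsOEmbedding A p.1 (fun b => e ++ b) ∧ IsOEmbedding B p.1 (pruneEmbO e)
      then
        let xA : TorS k Φ :=
          Finsupp.single (Quot.mk (pairRelO Φ) ⟨A, Φ.res _ h.1 p.2⟩) (1 : k)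
        let xB : TorS k Φ :=
          Finsupp.single (Quot.mk (pairRelO Φ) ⟨B, Φ.res _ h.2 p.2⟩) (1 : k)
        -- the flag of `e` is `true` iff `e` points away from the root side,
        -- i.e. towards the subtree `A` at `e`
        let x1 : TorS k Φ := if flagAtO e p.1 = some true then xB else xA
        let x2 : TorS k Φ := if flagAtO e p.1 = some true then xA else xB
        x1 ⊗ₜ[k] x2 - x2 ⊗ₜ[k] x1
      else tzero k _ _
  | none => tzero k _ _

/-- The Lie cobracket
`(T,s) ↦ Σ_{e ∈ E(T)} ((T_e^1, s|) ⊗ (T_e^2, s|) − (T_e^2, s|) ⊗ (T_e^1, s|))` on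
`T_or(Φ)` (computed on a representative pair; the result does not depend on the
choice). -/
def rhoOS : TorS k Φ →ₗ[k] TorS k Φ ⊗[k] TorS k Φ :=
  Finsupp.lift (TorS k Φ ⊗[k] TorS k Φ) k (OTSIso Φ) fun q =>
    lsum ((edgeListO q.out.1).map (rhoOSTerm k Φ q.out))

/-!
Write `[S]` for the class of the restriction of `(T, s)` to the subtree with vertex set `S`; it
depends on `S` only. An edge other than `d` has both endpoints on the same side of `d`, so, trees
being connected, embeddings preserve the sides of an edge. Hence the cobracket of `[S]` is the sum
over the edges `d` inside `S` of `[S ∩ tail side of d] ∧ [S ∩ head side of d]`, and it is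
antisymmetric. Deleting first `d` and then `f` leaves a component `M` between the two edges and
the far sides `A` of `d` and `B` of `f`. Its contribution to the co-Jacobi identity is
`± (Id + τ_{(123)} + τ_{(132)}) (([M] ∧ [B]) ⊗ [A])`, with a sign that is symmetric in `d` and
`f`. The cyclic sum of `(m ∧ b) ⊗ a` is antisymmetric in `a` and `b`, so the ordered pairs
`(d, f)` and `(f, d)` cancel.
-/

/-! ### Antisymmetric tensors and cyclic sums -/

section Wedge

variable (k : Type*) [CommRing k] {g : Type*} [AddCommGroup g] [Module k g]

/-- The antisymmetric tensor `x ∧ y = x ⊗ y - y ⊗ x`. -/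
def wedge (x y : g) : g ⊗[k] g := x ⊗ₜ[k] y - y ⊗ₜ[k] x

theorem tau2_wedge (x y : g) : tau2 k g (wedge k x y) = -wedge k x y := by
  simp [tau2, wedge]

theorem tau2_sum_wedge {ι : Type*} (t : Finset ι) (x y : ι → g) :
    tau2 k g (∑ i ∈ t, wedge k (x i) (y i)) = -∑ i ∈ t, wedge k (x i) (y i) := by
  simp only [map_sum, tau2_wedge, Finset.sum_neg_distrib]

variable (g) in
/-- The operator `Id + τ_{(123)} + τ_{(132)}` of the co-Jacobi identity, on `(g ⊗ g) ⊗ g`. -/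
def cyclicSum : (g ⊗[k] g) ⊗[k] g →ₗ[k] g ⊗[k] (g ⊗[k] g) :=
  (LinearMap.id + tau123 k g + tau132 k g) ∘ₗ (TensorProduct.assoc k g g g).toLinearMap

theorem cyclicSum_tmul (x y z : g) : cyclicSum k g ((x ⊗ₜ[k] y) ⊗ₜ[k] z) =
    x ⊗ₜ[k] (y ⊗ₜ[k] z) + z ⊗ₜ[k] (x ⊗ₜ[k] y) + y ⊗ₜ[k] (z ⊗ₜ[k] x) := by
  simp [cyclicSum, tau123, tau132]

theorem smul_cyclicSum_wedge_tmul_add_swap (c : ℤ) (m a b : g) :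
    c • cyclicSum k g (wedge k m a ⊗ₜ[k] b) + c • cyclicSum k g (wedge k m b ⊗ₜ[k] a) = 0 := by
  simp only [wedge, TensorProduct.sub_tmul, map_sub, cyclicSum_tmul, ← smul_add]
  convert smul_zero c
  abel

/-- The sign attached to the tail side (`false`, positive) or the head side (`true`, negative) of
an edge. -/
def sideSign (b : Bool) : ℤ := if b then -1 else 1

theorem cyclicSum_wedge_tmul_eq_smul (v : Bool → g) (y : g) (b : Bool) :
    cyclicSum k g (wedge k (v false) (v true) ⊗ₜ[k] y) =
      sideSign b • cyclicSum k g (wedge k (v b) (v !b) ⊗ₜ[k] y) := by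
  cases b <;> simp [sideSign, wedge, TensorProduct.sub_tmul]

theorem cyclicSum_rTensor_wedge (δ : g →ₗ[k] g ⊗[k] g) (v : Bool → g) :
    cyclicSum k g (LinearMap.rTensor g δ (wedge k (v false) (v true))) =
      ∑ b, sideSign b • cyclicSum k g (δ (v b) ⊗ₜ[k] v !b) := by
  simp [wedge, sideSign, sub_eq_neg_add]

end Wedge

/-! ### Vertices and directed edges -/

/-- The set of vertices of a tree. -/
def vtxSet (T : OTree) : Set (List ℕ) := {a | IsVtxO a T}

theorem nil_mem_vtxSet (T : OTree) : [] ∈ vtxSet T := by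
  cases T
  trivial

theorem flagAtO_nil (T : OTree) : flagAtO [] T = none := by
  cases T
  rfl

theorem flagAtO_cons (i : ℕ) (a : List ℕ) (l : List (Bool × OTree)) :
    flagAtO (i :: a) (.node l) =
      (l[i]?).bind fun u => if a = [] then some u.1 else flagAtO a u.2 := by
  cases a <;> cases h : l[i]? <;> simp [flagAtO, h]

theorem mem_vtxSet_iff_flagAtO {a : List ℕ} {T : OTree} :
    a ∈ vtxSet T ↔ a = [] ∨ (flagAtO a T).isSome := by
  induction a generalizing T with
  | nil => simp [nil_mem_vtxSet]
  | cons i a ih =>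
    obtain ⟨l⟩ := T
    change (∃ u, l[i]? = some u ∧ a ∈ vtxSet u.2) ↔ _
    cases h : l[i]? with
    | none => simp [flagAtO_cons, h]
    | some u => by_cases ha : a = [] <;> simp [flagAtO_cons, h, ih, ha, nil_mem_vtxSet]

theorem mem_vtxSet_of_append {a b : List ℕ} {T : OTree} (h : a ++ b ∈ vtxSet T) :
    a ∈ vtxSet T := by
  induction a generalizing T with
  | nil => exact nil_mem_vtxSet T
  | cons i a ih =>
    obtain ⟨l⟩ := T
    obtain ⟨u, hu, h⟩ := h
    exact ⟨u, hu, ih h⟩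

theorem DirEdge.mem_vtxSet {T : OTree} {x y : List ℕ} (h : DirEdge T x y) :
    x ∈ vtxSet T ∧ y ∈ vtxSet T := by
  rcases h with ⟨j, rfl, hf⟩ | ⟨j, rfl, hf⟩
  · have hy : x ++ [j] ∈ vtxSet T := mem_vtxSet_iff_flagAtO.2 (.inr (by simp [hf]))
    exact ⟨mem_vtxSet_of_append hy, hy⟩
  · have hx : y ++ [j] ∈ vtxSet T := mem_vtxSet_iff_flagAtO.2 (.inr (by simp [hf]))
    exact ⟨hx, mem_vtxSet_of_append hx⟩

theorem dirEdge_or_dirEdge_of_append {T : OTree} {a : List ℕ} {i : ℕ}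
    (h : a ++ [i] ∈ vtxSet T) : DirEdge T a (a ++ [i]) ∨ DirEdge T (a ++ [i]) a := by
  obtain ⟨o, ho⟩ := Option.isSome_iff_exists.1
    ((mem_vtxSet_iff_flagAtO.1 h).resolve_left (by simp))
  cases o
  · exact .inr (.inr ⟨i, rfl, ho⟩)
  · exact .inl (.inl ⟨i, rfl, ho⟩)

/-- This is how connectedness of trees enters: no paths are needed. -/
theorem eq_of_forall_dirEdge {α : Sort*} {T : OTree} {P : List ℕ → α}
    (h : ∀ x y, DirEdge T x y → P x = P y) {a b : List ℕ} (ha : a ∈ vtxSet T)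
    (hb : b ∈ vtxSet T) : P a = P b := by
  have eq_root : ∀ c ∈ vtxSet T, P c = P [] := by
    intro c
    induction c using List.reverseRecOn with
    | nil => exact fun _ => rfl
    | append_singleton c i ih =>
      intro hc
      rw [← ih (mem_vtxSet_of_append hc)]
      exact (dirEdge_or_dirEdge_of_append hc).elim (fun h' => (h _ _ h').symm) (h _ _)
  exact (eq_root a ha).trans (eq_root b hb).symm

/-! ### The two sides of an edge -/

/-- The side of the directed edge `d = (x, y)` on which the vertex `c` lies: `true` if `c` lies in
the component of `T ∖ d` containing the head `y`, and `false` if it lies in that of the tail `x`.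
-/
def sideOf (d : List ℕ × List ℕ) (c : List ℕ) : Bool :=
  if d.1 <+: d.2 then decide (d.2 <+: c) else !decide (d.1 <+: c)

theorem sideOf_append_right (x : List ℕ) (j : ℕ) (c : List ℕ) :
    sideOf (x, x ++ [j]) c = decide (x ++ [j] <+: c) := by
  simp [sideOf]

theorem sideOf_append_left (y : List ℕ) (j : ℕ) (c : List ℕ) :
    sideOf (y ++ [j], y) c = !decide (y ++ [j] <+: c) :=
  if_neg fun h => by simpa using h.length_le

section Sides

variable {T : OTree} {x y u v : List ℕ}

theorem sideOf_left (h : DirEdge T x y) : sideOf (x, y) x = false := by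
  rcases h with ⟨j, rfl, -⟩ | ⟨j, rfl, -⟩
  · rw [sideOf_append_right, decide_eq_false_iff_not]
    exact fun h => by simpa using h.length_le
  · simp [sideOf_append_left]

theorem sideOf_right (h : DirEdge T x y) : sideOf (x, y) y = true := by
  rcases h with ⟨j, rfl, -⟩ | ⟨j, rfl, -⟩
  · simp [sideOf_append_right]
  · rw [sideOf_append_left, Bool.not_eq_true', decide_eq_false_iff_not]
    exact fun h => by simpa using h.length_le

theorem sideOf_eq_sideOf (h : DirEdge T x y) (h' : DirEdge T u v) (hne : (u, v) ≠ (x, y)) :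
    sideOf (x, y) u = sideOf (x, y) v := by
  rcases h with ⟨j, rfl, h⟩ | ⟨j, rfl, h⟩ <;> rcases h' with ⟨i, rfl, h'⟩ | ⟨i, rfl, h'⟩ <;>
    simp only [sideOf_append_right, sideOf_append_left, Bool.not_inj_iff, decide_eq_decide,
      List.prefix_concat_iff] <;>
    grind [List.append_inj']

/-- No edge joins the intersection of the two far sides to its complement. -/
theorem sideOf_eq_or_sideOf_eq (h : DirEdge T x y) (h' : DirEdge T u v) (hne : (u, v) ≠ (x, y))
    {c : List ℕ} (hc : c ∈ vtxSet T) :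
    sideOf (x, y) c = sideOf (x, y) u ∨ sideOf (u, v) c = sideOf (u, v) x := by
  have invariant : ∀ a b, DirEdge T a b →
      (sideOf (x, y) a = sideOf (x, y) u ∨ sideOf (u, v) a = sideOf (u, v) x) =
        (sideOf (x, y) b = sideOf (x, y) u ∨ sideOf (u, v) b = sideOf (u, v) x) := by
    intro a b hab
    by_cases hx : (a, b) = (x, y)
    · obtain ⟨rfl, rfl⟩ := Prod.mk.inj hx
      simp [sideOf_eq_sideOf h' h hne.symm]
    by_cases hu : (a, b) = (u, v)
    · obtain ⟨rfl, rfl⟩ := Prod.mk.inj hu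
      simp [sideOf_eq_sideOf h h' hne]
    · rw [sideOf_eq_sideOf h hab hx, sideOf_eq_sideOf h' hab hu]
  exact (eq_of_forall_dirEdge invariant hc h.mem_vtxSet.1).mpr (.inr rfl)

end Sides

/-! ### Embeddings -/

theorem isOEmbedding_iff {T T' : OTree} {g : List ℕ → List ℕ} :
    IsOEmbedding T T' g ↔ Set.MapsTo g (vtxSet T) (vtxSet T') ∧ Set.InjOn g (vtxSet T) ∧
      ∀ x y, DirEdge T x y → DirEdge T' (g x) (g y) := by
  refine ⟨fun h => ⟨h.1, fun a ha b hb => h.2.1 a b ha hb, fun x y hxy => ?_⟩,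
    fun ⟨maps, inj, edge⟩ => ⟨maps, fun a b ha hb => inj ha hb, fun a i ha => ?_⟩⟩
  · obtain ⟨hx, hy⟩ := hxy.mem_vtxSet
    rcases hxy with ⟨j, rfl, hf⟩ | ⟨j, rfl, hf⟩
    · exact ((h.2.2 x j hy).resolve_right (by simp [hf])).2
    · exact ((h.2.2 y j hx).resolve_left (by simp [hf])).2
  · obtain ⟨o, ho⟩ := Option.isSome_iff_exists.1
      ((mem_vtxSet_iff_flagAtO.1 ha).resolve_left (by simp))
    cases o
    · exact .inr ⟨ho, edge _ _ (.inr ⟨i, rfl, ho⟩)⟩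
    · exact .inl ⟨ho, edge _ _ (.inl ⟨i, rfl, ho⟩)⟩

namespace IsOEmbedding

variable {T T' T'' : OTree} {f g : List ℕ → List ℕ}

theorem mapsTo (h : IsOEmbedding T T' g) : Set.MapsTo g (vtxSet T) (vtxSet T') :=
  (isOEmbedding_iff.1 h).1

theorem injOn (h : IsOEmbedding T T' g) : Set.InjOn g (vtxSet T) := (isOEmbedding_iff.1 h).2.1

theorem dirEdge_map (h : IsOEmbedding T T' g) {x y : List ℕ} (hxy : DirEdge T x y) :
    DirEdge T' (g x) (g y) :=
  (isOEmbedding_iff.1 h).2.2 x y hxy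

theorem id (T : OTree) : IsOEmbedding T T id :=
  isOEmbedding_iff.2 ⟨Set.mapsTo_id _, Set.injOn_id _, fun _ _ h => h⟩

theorem comp (hg : IsOEmbedding T' T'' g) (hf : IsOEmbedding T T' f) :
    IsOEmbedding T T'' (g ∘ f) :=
  isOEmbedding_iff.2 ⟨hg.mapsTo.comp hf.mapsTo, hg.injOn.comp hf.injOn hf.mapsTo,
    fun _ _ h => hg.dirEdge_map (hf.dirEdge_map h)⟩

theorem congr (h : IsOEmbedding T T' f) (hfg : Set.EqOn f g (vtxSet T)) : IsOEmbedding T T' g :=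
  isOEmbedding_iff.2 ⟨h.mapsTo.congr hfg, h.injOn.congr hfg, fun _ _ hxy =>
    hfg hxy.mem_vtxSet.1 ▸ hfg hxy.mem_vtxSet.2 ▸ h.dirEdge_map hxy⟩

theorem map_pair_eq_iff (h : IsOEmbedding T T' g) {x y u v : List ℕ} (hxy : DirEdge T x y)
    (huv : DirEdge T u v) : (g x, g y) = (g u, g v) ↔ (x, y) = (u, v) := by
  simp only [Prod.mk.injEq, h.injOn.eq_iff hxy.mem_vtxSet.1 huv.mem_vtxSet.1,
    h.injOn.eq_iff hxy.mem_vtxSet.2 huv.mem_vtxSet.2]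

theorem sideOf_map (h : IsOEmbedding T T' g) {x y c : List ℕ} (hxy : DirEdge T x y)
    (hc : c ∈ vtxSet T) : sideOf (g x, g y) (g c) = sideOf (x, y) c := by
  have hxy' := h.dirEdge_map hxy
  have left : sideOf (g x, g y) (g x) = sideOf (x, y) x :=
    (sideOf_left hxy').trans (sideOf_left hxy).symm
  have right : sideOf (g x, g y) (g y) = sideOf (x, y) y :=
    (sideOf_right hxy').trans (sideOf_right hxy).symm
  have invariant : ∀ u v, DirEdge T u v → (sideOf (g x, g y) (g u) = sideOf (x, y) u) =
      (sideOf (g x, g y) (g v) = sideOf (x, y) v) := by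
    intro u v huv
    by_cases hne : (u, v) = (x, y)
    · obtain ⟨rfl, rfl⟩ := Prod.mk.inj hne
      exact propext ⟨fun _ => right, fun _ => left⟩
    · rw [sideOf_eq_sideOf hxy huv hne, sideOf_eq_sideOf hxy' (h.dirEdge_map huv)
        (mt (h.map_pair_eq_iff huv hxy).1 hne)]
  exact (eq_of_forall_dirEdge invariant hc hxy.mem_vtxSet.1).mpr left

/-- If no edge `(x, y)` existed, the side of `(g x, g y)` would be constant along `g`. -/
theorem dirEdge_of_map (h : IsOEmbedding T T' g) {x y : List ℕ} (hx : x ∈ vtxSet T)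
    (hy : y ∈ vtxSet T) (hxy : DirEdge T' (g x) (g y)) : DirEdge T x y := by
  by_contra hcon
  have invariant : ∀ u v, DirEdge T u v →
      sideOf (g x, g y) (g u) = sideOf (g x, g y) (g v) := by
    refine fun u v huv => sideOf_eq_sideOf hxy (h.dirEdge_map huv) fun heq => hcon ?_
    obtain ⟨hu, hv⟩ := Prod.mk.inj heq
    rwa [← h.injOn huv.mem_vtxSet.1 hx hu, ← h.injOn huv.mem_vtxSet.2 hy hv]
  have hconst := eq_of_forall_dirEdge invariant hx hy
  rw [sideOf_left hxy, sideOf_right hxy] at hconst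
  exact Bool.false_ne_true hconst

theorem exists_comp_eq {T₁ T₂ : OTree} {g₁ g₂ : List ℕ → List ℕ} (h₁ : IsOEmbedding T₁ T g₁)
    (h₂ : IsOEmbedding T₂ T g₂) (hsub : ∀ a, g₁ a ∈ g₂ '' vtxSet T₂) :
    ∃ f, IsOEmbedding T₁ T₂ f ∧ g₂ ∘ f = g₁ := by
  choose f hf hgf using hsub
  refine ⟨f, isOEmbedding_iff.2 ⟨fun a _ => hf a, fun a ha b hb hab => h₁.injOn ha hb ?_,
    fun x y hxy => h₂.dirEdge_of_map (hf x) (hf y) ?_⟩, funext hgf⟩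
  · rw [← hgf a, hab, hgf b]
  · rw [hgf, hgf]
    exact h₁.dirEdge_map hxy

end IsOEmbedding

/-- Embeddings are functions on all addresses; precomposing with a retraction onto the vertices
discards the irrelevant values. -/
theorem exists_retraction_vtxSet (T : OTree) :
    ∃ r, IsOEmbedding T T r ∧ (∀ a, r a ∈ vtxSet T) ∧ Set.EqOn r id (vtxSet T) := by
  have hr : Set.EqOn (fun a => if a ∈ vtxSet T then a else []) id (vtxSet T) :=
    fun a ha => if_pos ha
  refine ⟨_, (IsOEmbedding.id T).congr hr.symm, fun a => ?_, hr⟩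
  split_ifs with ha
  · exact ha
  · exact nil_mem_vtxSet T

/-! ### The finite set of edges -/

mutual
theorem mem_vtxListO (T : OTree) (a : List ℕ) : a ∈ vtxListO T ↔ a ∈ vtxSet T := by
  match T, a with
  | .node l, [] => simp [vtxListO, nil_mem_vtxSet]
  | .node l, i :: a => simp [vtxListO, vtxSet, IsVtxO, mem_vtxListOL l 0 (i :: a)]
theorem mem_vtxListOL (l : List (Bool × OTree)) (n : ℕ) (a : List ℕ) :
    a ∈ vtxListOL n l ↔ ∃ i b, a = (n + i) :: b ∧ ∃ u, l[i]? = some u ∧ b ∈ vtxSet u.2 := by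
  match l with
  | [] => simp [vtxListOL]
  | (o, u) :: ts =>
    simp only [vtxListOL, List.mem_append, List.mem_map, mem_vtxListO u,
      mem_vtxListOL ts (n + 1) a]
    constructor
    · rintro (⟨b, hb, rfl⟩ | ⟨i, b, rfl, h⟩)
      · exact ⟨0, b, rfl, _, rfl, hb⟩
      · exact ⟨i + 1, b, by congr 1; omega, by simpa using h⟩
    · rintro ⟨i, b, rfl, v, hv, hb⟩
      cases i with
      | zero =>
        obtain rfl : (o, u) = v := by simpa using hv
        exact .inl ⟨b, hb, rfl⟩
      | succ i => exact .inr ⟨i, b, by congr 1; omega, v, by simpa using hv, hb⟩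
end

mutual
theorem nodup_vtxListO (T : OTree) : (vtxListO T).Nodup := by
  match T with
  | .node l => simp [vtxListO, nodup_vtxListOL l 0, mem_vtxListOL l 0]
theorem nodup_vtxListOL (l : List (Bool × OTree)) (n : ℕ) : (vtxListOL n l).Nodup := by
  match l with
  | [] => simp [vtxListOL]
  | (_, u) :: ts =>
    refine ((nodup_vtxListO u).map List.cons_injective).append (nodup_vtxListOL ts (n + 1)) ?_
    intro a ha hb
    obtain ⟨b, -, rfl⟩ := List.mem_map.1 ha
    obtain ⟨i, c, h, -⟩ := (mem_vtxListOL ts (n + 1) _).1 hb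
    simp only [List.cons.injEq] at h
    omega
end

theorem mem_edgeListO {T : OTree} {e : List ℕ} : e ∈ edgeListO T ↔ e ∈ vtxSet T ∧ e ≠ [] := by
  simp [edgeListO, mem_vtxListO]

/-- The edge joining the vertex `e` to its parent, as the pair (tail, head). -/
def orient (T : OTree) (e : List ℕ) : List ℕ × List ℕ :=
  if flagAtO e T = some true then (e.dropLast, e) else (e, e.dropLast)

theorem orient_injOn (T : OTree) : Set.InjOn (orient T) {e | e ≠ []} := by
  intro e he e' he' h
  have length_lt : ∀ c : List ℕ, c ≠ [] → c.dropLast.length < c.length := fun c hc => by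
    simpa using List.length_pos_iff.2 hc
  have := length_lt e he
  have := length_lt e' he'
  simp only [orient] at h
  split_ifs at h <;> grind

theorem dirEdge_iff_exists_orient {T : OTree} {d : List ℕ × List ℕ} :
    DirEdge T d.1 d.2 ↔ ∃ e ∈ edgeListO T, orient T e = d := by
  constructor
  · obtain ⟨x, y⟩ := d
    intro (h : DirEdge T x y)
    obtain ⟨hx, hy⟩ := h.mem_vtxSet
    rcases h with ⟨j, rfl, hf⟩ | ⟨j, rfl, hf⟩
    · exact ⟨_, mem_edgeListO.2 ⟨hy, by simp⟩, by simp [orient, hf]⟩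
    · exact ⟨_, mem_edgeListO.2 ⟨hx, by simp⟩, by simp [orient, hf]⟩
  · rintro ⟨e, he, rfl⟩
    obtain ⟨hv, hne⟩ := mem_edgeListO.1 he
    obtain ⟨a, i, rfl⟩ := (List.eq_nil_or_concat' e).resolve_left hne
    obtain ⟨o, ho⟩ := Option.isSome_iff_exists.1 ((mem_vtxSet_iff_flagAtO.1 hv).resolve_left hne)
    cases o <;> simp only [orient, ho, List.dropLast_concat]
    · exact .inr ⟨i, rfl, ho⟩
    · exact .inl ⟨i, rfl, ho⟩

/-- The set of edges of a tree, as pairs (tail, head). -/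
def dirEdgeFinset (T : OTree) : Finset (List ℕ × List ℕ) :=
  ((edgeListO T).map (orient T)).toFinset

theorem mem_dirEdgeFinset {T : OTree} {d : List ℕ × List ℕ} :
    d ∈ dirEdgeFinset T ↔ DirEdge T d.1 d.2 := by
  simp [dirEdgeFinset, dirEdge_iff_exists_orient]

theorem lsum_map_orient {M : Type*} [AddCommMonoid M] (T : OTree)
    (f : List ℕ × List ℕ → M) :
    lsum ((edgeListO T).map fun e => f (orient T e)) = ∑ d ∈ dirEdgeFinset T, f d := by
  have nodup : ((edgeListO T).map (orient T)).Nodup :=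
    ((nodup_vtxListO T).filter _).map_on fun e he e' he' =>
      orient_injOn T (mem_edgeListO.1 he).2 (mem_edgeListO.1 he').2
  rw [dirEdgeFinset, List.sum_toFinset f nodup, List.map_map]
  rfl

/-- The edges of `T` with both endpoints in `S`. -/
def edgesIn (T : OTree) (S : Set (List ℕ)) : Finset (List ℕ × List ℕ) :=
  {d ∈ dirEdgeFinset T | d.1 ∈ S ∧ d.2 ∈ S}

theorem edgesIn_vtxSet (T : OTree) : edgesIn T (vtxSet T) = dirEdgeFinset T :=
  Finset.filter_true_of_mem fun _ hd => (mem_dirEdgeFinset.1 hd).mem_vtxSet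

theorem IsOEmbedding.bijOn_edgesIn {T T' : OTree} {g : List ℕ → List ℕ}
    (h : IsOEmbedding T T' g) :
    Set.BijOn (Prod.map g g) (dirEdgeFinset T) (edgesIn T' (g '' vtxSet T)) := by
  refine ⟨fun d hd => ?_, fun d hd d' hd' => ?_, fun d hd => ?_⟩
  · have hd := mem_dirEdgeFinset.1 hd
    exact Finset.mem_filter.2 ⟨mem_dirEdgeFinset.2 (h.dirEdge_map hd),
      ⟨_, hd.mem_vtxSet.1, rfl⟩, ⟨_, hd.mem_vtxSet.2, rfl⟩⟩
  · exact (h.map_pair_eq_iff (mem_dirEdgeFinset.1 hd) (mem_dirEdgeFinset.1 hd')).1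
  · obtain ⟨x, y⟩ := d
    obtain ⟨hd, ⟨u, hu, rfl⟩, ⟨v, hv, rfl⟩⟩ := Finset.mem_filter.1 hd
    exact ⟨(u, v), mem_dirEdgeFinset.2 (h.dirEdge_of_map hu hv (mem_dirEdgeFinset.1 hd)), rfl⟩

/-! ### The two components of the complement of an edge -/

/-- An embedding of the planar representation `T` onto a part of `T'`: the root of `T` goes to any
vertex of `T'`, children go to children, and the edge flags agree. -/
structure IsPlanarEmbedding (T T' : OTree) (f : List ℕ → List ℕ) : Prop where
  nil_mem : f [] ∈ vtxSet T'
  injective : f.Injective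
  exists_append : ∀ a i, ∃ j, f (a ++ [i]) = f a ++ [j]
  flagAtO_map : ∀ a ≠ [], flagAtO (f a) T' = flagAtO a T

namespace IsPlanarEmbedding

variable {T T' : OTree} {f : List ℕ → List ℕ}

theorem preimage_vtxSet (h : IsPlanarEmbedding T T' f) : f ⁻¹' vtxSet T' = vtxSet T := by
  ext a
  rcases List.eq_nil_or_concat a with rfl | ⟨b, i, rfl⟩
  · simp [h.nil_mem, nil_mem_vtxSet]
  · obtain ⟨j, hj⟩ := h.exists_append b i
    have hf : f (b ++ [i]) ≠ [] := by simp [hj]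
    simp [mem_vtxSet_iff_flagAtO, hf, h.flagAtO_map]

theorem image_vtxSet (h : IsPlanarEmbedding T T' f) : f '' vtxSet T = vtxSet T' ∩ Set.range f := by
  rw [← h.preimage_vtxSet, Set.image_preimage_eq_inter_range]

theorem isOEmbedding (h : IsPlanarEmbedding T T' f) : IsOEmbedding T T' f := by
  refine isOEmbedding_iff.2 ⟨h.preimage_vtxSet.superset, h.injective.injOn, ?_⟩
  rintro x y (⟨i, rfl, hi⟩ | ⟨i, rfl, hi⟩)
  · obtain ⟨j, hj⟩ := h.exists_append x i
    exact .inl ⟨j, hj, by rw [h.flagAtO_map _ (by simp), hi]⟩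
  · obtain ⟨j, hj⟩ := h.exists_append y i
    exact .inr ⟨j, hj, by rw [h.flagAtO_map _ (by simp), hi]⟩

end IsPlanarEmbedding

theorem exists_subAtO_eq_some {e : List ℕ} {T : OTree} (he : e ∈ vtxSet T) :
    ∃ A, subAtO e T = some A := by
  induction e generalizing T with
  | nil => exact ⟨T, by cases T; rfl⟩
  | cons i e ih =>
    obtain ⟨l⟩ := T
    obtain ⟨u, hu, he⟩ := he
    simpa [subAtO, hu] using ih he

theorem flagAtO_append_of_subAtO {e b : List ℕ} {T A : OTree} (h : subAtO e T = some A)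
    (hb : b ≠ []) : flagAtO (e ++ b) T = flagAtO b A := by
  induction e generalizing T with
  | nil =>
    obtain rfl : T = A := by cases T; simpa [subAtO] using h
    rfl
  | cons i e ih =>
    obtain ⟨l⟩ := T
    cases hu : l[i]? with
    | none => simp [subAtO, hu] at h
    | some u => simpa [flagAtO_cons, hu, hb] using ih (by simpa [subAtO, hu] using h)

theorem isPlanarEmbedding_append {e : List ℕ} {T A : OTree} (he : e ∈ vtxSet T)
    (hA : subAtO e T = some A) : IsPlanarEmbedding A T (e ++ ·) where
  nil_mem := by simpa using he
  injective := List.append_right_injective e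
  exists_append a i := ⟨i, by simp⟩
  flagAtO_map _ := flagAtO_append_of_subAtO hA

theorem pruneEmbO_nil_right (e : List ℕ) : pruneEmbO e [] = [] := by
  unfold pruneEmbO
  split <;> simp

theorem pruneEmbO_singleton_cons (i j : ℕ) (b : List ℕ) :
    pruneEmbO [i] (j :: b) = (if i ≤ j then j + 1 else j) :: b := by
  simp only [pruneEmbO, List.getLast?_singleton, List.dropLast_singleton, List.isPrefixOf_nil_left,
    if_true, List.length_nil, List.drop_zero, List.nil_append]
  split_ifs <;> rfl

theorem pruneEmbO_cons_cons (i j m : ℕ) (e b : List ℕ) :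
    pruneEmbO (i :: j :: e) (m :: b) = m :: if i = m then pruneEmbO (j :: e) b else b := by
  unfold pruneEmbO
  rw [List.getLast?_cons_cons, List.getLast?_eq_some_getLast (List.cons_ne_nil j e)]
  simp only [List.dropLast_cons_cons, List.isPrefixOf]
  by_cases h : i = m
  · subst h
    simp only [beq_self_eq_true, Bool.true_and, List.length_cons, List.drop_succ_cons]
    split <;> [split; simp]
    · simp
    · split <;> simp
  · simp [h]

theorem pruneEmbO_injective (e : List ℕ) : (pruneEmbO e).Injective := by
  induction e with
  | nil => exact Function.injective_id
  | cons i e ih =>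
    intro b c h
    cases b <;> cases c <;> cases e <;>
      simp only [pruneEmbO_nil_right, pruneEmbO_singleton_cons, pruneEmbO_cons_cons] at h <;>
      grind [Function.Injective]

theorem pruneEmbO_append_singleton (e b : List ℕ) (i : ℕ) :
    ∃ j, pruneEmbO e (b ++ [i]) = pruneEmbO e b ++ [j] := by
  induction e generalizing b with
  | nil => exact ⟨i, rfl⟩
  | cons l e ih =>
    cases b <;> cases e <;>
      simp only [List.nil_append, List.cons_append, pruneEmbO_nil_right, pruneEmbO_singleton_cons,
        pruneEmbO_cons_cons]
    · simp
    · simp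
    · simp
    · split_ifs
      · simpa using ih _
      · simp

theorem range_pruneEmbO {e : List ℕ} (he : e ≠ []) :
    Set.range (pruneEmbO e) = {c | ¬ e <+: c} := by
  induction e with
  | nil => exact absurd rfl he
  | cons i e ih =>
    ext c
    cases c with
    | nil => simpa using ⟨[], pruneEmbO_nil_right _⟩
    | cons m c =>
      have hrange : m :: c ∈ Set.range (pruneEmbO (i :: e)) ↔
          ∃ n b, pruneEmbO (i :: e) (n :: b) = m :: c := by
        refine ⟨fun ⟨b, h⟩ => ?_, fun ⟨n, b, h⟩ => ⟨_, h⟩⟩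
        cases b with
        | nil => simp [pruneEmbO_nil_right] at h
        | cons n b => exact ⟨n, b, h⟩
      rw [hrange]
      cases e with
      | nil =>
        have skip : (∃ n, (if i ≤ n then n + 1 else n) = m) ↔ i ≠ m :=
          ⟨by grind, fun h => ⟨if i ≤ m then m - 1 else m, by grind⟩⟩
        simp [pruneEmbO_singleton_cons, skip]
      | cons j e =>
        have ih : (∃ b, pruneEmbO (j :: e) b = c) ↔ ¬ j :: e <+: c := Set.ext_iff.1 (ih (by simp)) c
        by_cases h : i = m <;> simp [pruneEmbO_cons_cons, List.cons_prefix_cons, h, ih]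

theorem flagAtO_pruneEmbO {e : List ℕ} {T : OTree} (he : e ∈ vtxSet T) (b : List ℕ) :
    flagAtO (pruneEmbO e b) T = flagAtO b (pruneO e T) := by
  induction e generalizing T b with
  | nil => cases T; rfl
  | cons i e ih =>
    obtain ⟨l⟩ := T
    obtain ⟨u, hu, he⟩ := he
    cases b with
    | nil => simp [pruneEmbO_nil_right, flagAtO_nil]
    | cons m b =>
      cases e with
      | nil =>
        simp only [pruneEmbO_singleton_cons, pruneO, flagAtO_cons, List.getElem?_eraseIdx]
        grind
      | cons j e =>
        have hi : i < l.length := (List.getElem?_eq_some_iff.1 hu).1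
        have hprune : pruneO (i :: j :: e) (.node l) =
            .node (l.set i (u.1, pruneO (j :: e) u.2)) := by simp [pruneO, hu]
        have hnil : pruneEmbO (j :: e) b = [] ↔ b = [] :=
          (pruneEmbO_injective _).eq_iff' (pruneEmbO_nil_right _)
        rw [pruneEmbO_cons_cons, hprune, flagAtO_cons, flagAtO_cons]
        by_cases him : i = m
        · subst him
          simp only [if_true, hu, List.getElem?_set_self hi, Option.bind_some, hnil, ih he]
        · simp [him]

theorem isPlanarEmbedding_pruneEmbO {e : List ℕ} {T : OTree} (he : e ∈ vtxSet T) :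
    IsPlanarEmbedding (pruneO e T) T (pruneEmbO e) where
  nil_mem := by simpa [pruneEmbO_nil_right] using nil_mem_vtxSet T
  injective := pruneEmbO_injective e
  exists_append := pruneEmbO_append_singleton e
  flagAtO_map b _ := flagAtO_pruneEmbO he b

/-! ### Subtrees and their classes -/

/-- `S` is the vertex set of a subtree of `T`. -/
def IsSubtree (T : OTree) (S : Set (List ℕ)) : Prop :=
  ∃ T' g, IsOEmbedding T' T g ∧ g '' vtxSet T' = S

/-- The vertices of `S` on the given side of the edge `d`. -/
def sideSet (S : Set (List ℕ)) (d : List ℕ × List ℕ) (b : Bool) : Set (List ℕ) :=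
  {c ∈ S | sideOf d c = b}

theorem IsOEmbedding.image_sideSet {T T' : OTree} {g : List ℕ → List ℕ}
    (h : IsOEmbedding T T' g) {d : List ℕ × List ℕ} (hd : DirEdge T d.1 d.2) (b : Bool) :
    g '' sideSet (vtxSet T) d b = sideSet (g '' vtxSet T) (Prod.map g g d) b := by
  ext c
  constructor
  · rintro ⟨a, ⟨ha, hb⟩, rfl⟩
    exact ⟨⟨a, ha, rfl⟩, (h.sideOf_map hd ha).trans hb⟩
  · rintro ⟨⟨a, ha, rfl⟩, hb⟩
    exact ⟨a, ⟨ha, (h.sideOf_map hd ha).symm.trans hb⟩, rfl⟩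

theorem sideOf_orient_eq_iff {T : OTree} {e : List ℕ} (he : e ≠ []) (c : List ℕ) :
    sideOf (orient T e) c = decide (flagAtO e T = some true) ↔ e <+: c := by
  obtain ⟨a, i, rfl⟩ := (List.eq_nil_or_concat e).resolve_left he
  by_cases hf : flagAtO (a ++ [i]) T = some true <;>
    simp [orient, hf, sideOf_append_right, sideOf_append_left]

theorem image_append_vtxSet {e : List ℕ} {T A : OTree} (he : e ∈ edgeListO T)
    (hA : subAtO e T = some A) : (e ++ ·) '' vtxSet A =
      sideSet (vtxSet T) (orient T e) (decide (flagAtO e T = some true)) := by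
  obtain ⟨hv, hne⟩ := mem_edgeListO.1 he
  rw [(isPlanarEmbedding_append hv hA).image_vtxSet]
  ext c
  have hrange : c ∈ Set.range (e ++ ·) ↔ e <+: c := Iff.rfl
  simp only [sideSet, hrange, Set.mem_inter_iff, Set.mem_sep_iff, sideOf_orient_eq_iff hne]

theorem image_pruneEmbO_vtxSet {e : List ℕ} {T : OTree} (he : e ∈ edgeListO T) :
    pruneEmbO e '' vtxSet (pruneO e T) =
      sideSet (vtxSet T) (orient T e) (!decide (flagAtO e T = some true)) := by
  obtain ⟨hv, hne⟩ := mem_edgeListO.1 he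
  rw [(isPlanarEmbedding_pruneEmbO hv).image_vtxSet, range_pruneEmbO hne]
  ext c
  simp [sideSet, Bool.eq_not, sideOf_orient_eq_iff hne]

theorem isSubtree_sideSet {T : OTree} {d : List ℕ × List ℕ} (hd : DirEdge T d.1 d.2) (b : Bool) :
    IsSubtree T (sideSet (vtxSet T) d b) := by
  obtain ⟨e, he, rfl⟩ := dirEdge_iff_exists_orient.1 hd
  have hv := (mem_edgeListO.1 he).1
  obtain ⟨A, hA⟩ := exists_subAtO_eq_some hv
  rcases Bool.eq_or_eq_not b (decide (flagAtO e T = some true)) with rfl | rfl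
  · exact ⟨A, _, (isPlanarEmbedding_append hv hA).isOEmbedding, image_append_vtxSet he hA⟩
  · exact ⟨_, _, (isPlanarEmbedding_pruneEmbO hv).isOEmbedding, image_pruneEmbO_vtxSet he⟩

section Classes

variable {Φ : OTreeStructure.{u}} {T : OTree}

/-- The isomorphism class of the pair `(T, s)`. -/
def isoClass (s : Φ.F T) : OTSIso Φ := Quot.mk (pairRelO Φ) ⟨T, s⟩

theorem isoClass_res_of_image_eq {T' : OTree} {f : List ℕ → List ℕ} (hf : IsOEmbedding T' T f)
    (himage : f '' vtxSet T' = vtxSet T) (s : Φ.F T) : isoClass (Φ.res f hf s) = isoClass s :=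
  Quot.sound ⟨f, hf, fun _ hb => himage.superset hb, rfl⟩

theorem isoClass_res_eq_of_image_eq {T₁ T₂ : OTree} {g₁ g₂ : List ℕ → List ℕ}
    (h₁ : IsOEmbedding T₁ T g₁) (h₂ : IsOEmbedding T₂ T g₂)
    (himage : g₁ '' vtxSet T₁ = g₂ '' vtxSet T₂) (s : Φ.F T) :
    isoClass (Φ.res g₁ h₁ s) = isoClass (Φ.res g₂ h₂ s) := by
  obtain ⟨r, hr, hr_mem, hr_id⟩ := exists_retraction_vtxSet T₁
  have hr_image : r '' vtxSet T₁ = vtxSet T₁ := by rw [hr_id.image_eq, Set.image_id]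
  obtain ⟨f, hf, hfg⟩ := (h₁.comp hr).exists_comp_eq h₂ fun a =>
    himage.subset (Set.mem_image_of_mem g₁ (hr_mem a))
  have hf_image : f '' vtxSet T₁ = vtxSet T₂ := by
    refine (h₂.injOn.image_eq_image_iff hf.mapsTo.image_subset subset_rfl).1 ?_
    rw [← Set.image_comp, hfg, Set.image_comp, hr_image, himage]
  have hres : Φ.res f hf (Φ.res g₂ h₂ s) = Φ.res r hr (Φ.res g₁ h₁ s) := by
    rw [← Φ.res_comp f g₂ hf h₂ (h₂.comp hf), ← Φ.res_comp r g₁ hr h₁ (h₁.comp hr)]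
    congr 1
  rw [← isoClass_res_of_image_eq hr hr_image, ← hres, isoClass_res_of_image_eq hf hf_image]

variable (k : Type*) [CommRing k]

/-- The basis vector of `T_or(Φ)` given by the restriction of `(T, s)` to the subtree with vertex
set `S`; it is `0` if `S` does not span a subtree. -/
def restrVec (s : Φ.F T) (S : Set (List ℕ)) : TorS k Φ :=
  if h : IsSubtree T S then
    Finsupp.single (isoClass (Φ.res _ h.choose_spec.choose_spec.1 s)) 1
  else 0

theorem single_isoClass_res (s : Φ.F T) {T' : OTree} {g : List ℕ → List ℕ}
    (hg : IsOEmbedding T' T g) :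
    Finsupp.single (isoClass (Φ.res g hg s)) (1 : k) = restrVec k s (g '' vtxSet T') := by
  have h : IsSubtree T (g '' vtxSet T') := ⟨T', g, hg, rfl⟩
  rw [restrVec, dif_pos h,
    isoClass_res_eq_of_image_eq hg _ h.choose_spec.choose_spec.2.symm]

theorem single_isoClass (s : Φ.F T) :
    Finsupp.single (isoClass s) (1 : k) = restrVec k s (vtxSet T) := by
  have h := single_isoClass_res k s (.id T)
  rwa [Φ.res_id, Set.image_id] at h

theorem restrVec_res (s : Φ.F T) {T' : OTree} {g : List ℕ → List ℕ} (hg : IsOEmbedding T' T g)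
    {S : Set (List ℕ)} (hS : IsSubtree T' S) :
    restrVec k (Φ.res g hg s) S = restrVec k s (g '' S) := by
  obtain ⟨T'', f, hf, rfl⟩ := hS
  rw [← single_isoClass_res k (Φ.res g hg s) hf, ← Φ.res_comp f g hf hg (hg.comp hf),
    single_isoClass_res, Set.image_comp]

/-! ### The cobracket of a subtree -/

/-- The summand given by the edge `d` in the cobracket of the restriction of `(T, s)` to the
subtree with vertex set `S`. -/
def cutTerm (s : Φ.F T) (S : Set (List ℕ)) (d : List ℕ × List ℕ) : TorS k Φ ⊗[k] TorS k Φ :=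
  wedge k (restrVec k s (sideSet S d false)) (restrVec k s (sideSet S d true))

theorem rhoOSTerm_eq_cutTerm (s : Φ.F T) {e : List ℕ} (he : e ∈ edgeListO T) :
    rhoOSTerm k Φ ⟨T, s⟩ e = cutTerm k s (vtxSet T) (orient T e) := by
  have hv := (mem_edgeListO.1 he).1
  obtain ⟨A, hA⟩ := exists_subAtO_eq_some hv
  have hsub := (isPlanarEmbedding_append hv hA).isOEmbedding
  have hprune := (isPlanarEmbedding_pruneEmbO hv).isOEmbedding
  have vecA := single_isoClass_res k s hsub
  have vecB := single_isoClass_res k s hprune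
  rw [image_append_vtxSet he hA] at vecA
  rw [image_pruneEmbO_vtxSet he] at vecB
  rw [isoClass] at vecA vecB
  simp only [rhoOSTerm, hA, hsub, hprune, and_self, dite_true, vecA, vecB, cutTerm, wedge]
  by_cases hf : flagAtO e T = some true <;> simp [hf]

theorem cutTerm_res (s : Φ.F T) {T' : OTree} {g : List ℕ → List ℕ} (hg : IsOEmbedding T' T g)
    {d : List ℕ × List ℕ} (hd : DirEdge T' d.1 d.2) :
    cutTerm k (Φ.res g hg s) (vtxSet T') d = cutTerm k s (g '' vtxSet T') (Prod.map g g d) := by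
  simp only [cutTerm, restrVec_res k s hg (isSubtree_sideSet hd _), hg.image_sideSet hd]

theorem sum_cutTerm_res (s : Φ.F T) {T' : OTree} {g : List ℕ → List ℕ}
    (hg : IsOEmbedding T' T g) :
    ∑ d ∈ dirEdgeFinset T', cutTerm k (Φ.res g hg s) (vtxSet T') d =
      ∑ d ∈ edgesIn T (g '' vtxSet T'), cutTerm k s (g '' vtxSet T') d :=
  Finset.sum_nbij (Prod.map g g) hg.bijOn_edgesIn.mapsTo hg.bijOn_edgesIn.injOn
    hg.bijOn_edgesIn.surjOn fun _ hd => cutTerm_res k s hg (mem_dirEdgeFinset.1 hd)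

theorem sum_cutTerm_eq_of_pairRelO {p q : OTS Φ} (h : pairRelO Φ p q) :
    ∑ d ∈ dirEdgeFinset p.1, cutTerm k p.2 (vtxSet p.1) d =
      ∑ d ∈ dirEdgeFinset q.1, cutTerm k q.2 (vtxSet q.1) d := by
  obtain ⟨T, s⟩ := p
  obtain ⟨T', s'⟩ := q
  obtain ⟨f, (hf : IsOEmbedding T T' f), hsurj, (rfl : Φ.res f hf s' = s)⟩ := h
  have himage : f '' vtxSet T = vtxSet T' := hf.mapsTo.image_subset.antisymm hsurj
  rw [sum_cutTerm_res, himage, edgesIn_vtxSet]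

theorem lsum_map_rhoOSTerm (s : Φ.F T) :
    lsum ((edgeListO T).map (rhoOSTerm k Φ ⟨T, s⟩)) =
      ∑ d ∈ dirEdgeFinset T, cutTerm k s (vtxSet T) d := by
  rw [← lsum_map_orient, List.map_congr_left fun e he => rhoOSTerm_eq_cutTerm k s he]

theorem rhoOS_restrVec_vtxSet (s : Φ.F T) :
    rhoOS k Φ (restrVec k s (vtxSet T)) = ∑ d ∈ dirEdgeFinset T, cutTerm k s (vtxSet T) d := by
  let δ : OTSIso Φ → TorS k Φ ⊗[k] TorS k Φ :=
    Quot.lift (fun p => ∑ d ∈ dirEdgeFinset p.1, cutTerm k p.2 (vtxSet p.1) d)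
      fun _ _ => sum_cutTerm_eq_of_pairRelO k
  have rhoOS_single (q : OTSIso Φ) : rhoOS k Φ (Finsupp.single q 1) = δ q :=
    calc rhoOS k Φ (Finsupp.single q 1)
        = lsum ((edgeListO q.out.1).map (rhoOSTerm k Φ q.out)) := by simp [rhoOS]
      _ = δ (Quot.mk _ q.out) := lsum_map_rhoOSTerm k _
      _ = δ q := congrArg δ q.out_eq
  rw [← single_isoClass, rhoOS_single]
  rfl

theorem rhoOS_restrVec (s : Φ.F T) {S : Set (List ℕ)} (hS : IsSubtree T S) :
    rhoOS k Φ (restrVec k s S) = ∑ d ∈ edgesIn T S, cutTerm k s S d := by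
  obtain ⟨T', g, hg, rfl⟩ := hS
  rw [← single_isoClass_res k s hg, single_isoClass, rhoOS_restrVec_vtxSet, sum_cutTerm_res]

variable {k} in
theorem TorS.hom_ext {M : Type*} [AddCommMonoid M] [Module k M] {f g : TorS k Φ →ₗ[k] M}
    (h : ∀ (T : OTree) (s : Φ.F T), f (restrVec k s (vtxSet T)) = g (restrVec k s (vtxSet T))) :
    f = g := by
  refine Finsupp.lhom_ext' fun q => LinearMap.ext_ring ?_
  obtain ⟨p, rfl⟩ := Quot.exists_rep q
  simp only [← single_isoClass] at h
  exact h p.1 p.2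

/-! ### The co-Jacobi identity -/

theorem edgesIn_sideSet {d : List ℕ × List ℕ} (hd : DirEdge T d.1 d.2) (b : Bool) :
    edgesIn T (sideSet (vtxSet T) d b) =
      {f ∈ (dirEdgeFinset T).erase d | sideOf d f.1 = b} := by
  ext f
  simp only [edgesIn, sideSet, Finset.mem_filter, Finset.mem_erase, mem_dirEdgeFinset,
    Set.mem_sep_iff]
  constructor
  · rintro ⟨hf, ⟨-, left⟩, -, right⟩
    refine ⟨⟨?_, hf⟩, left⟩
    rintro rfl
    exact Bool.false_ne_true
      ((sideOf_left hd).symm.trans (left.trans (right.symm.trans (sideOf_right hd))))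
  · rintro ⟨⟨hne, hf⟩, hb⟩
    have hf' : sideOf d f.2 = b := (sideOf_eq_sideOf hd hf hne).symm.trans hb
    exact ⟨hf, ⟨hf.mem_vtxSet.1, hb⟩, hf.mem_vtxSet.2, hf'⟩

/-- The contribution to the co-Jacobi identity of deleting the edge `d` and then the edge `f`. -/
def jacobiTerm (s : Φ.F T) (d f : List ℕ × List ℕ) : TorS k Φ ⊗[k] (TorS k Φ ⊗[k] TorS k Φ) :=
  sideSign (sideOf d f.1) • cyclicSum k (TorS k Φ)
    (cutTerm k s (sideSet (vtxSet T) d (sideOf d f.1)) f ⊗ₜ[k]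
      restrVec k s (sideSet (vtxSet T) d !sideOf d f.1))

theorem cyclicSum_rTensor_cutTerm (s : Φ.F T) {d : List ℕ × List ℕ} (hd : DirEdge T d.1 d.2) :
    cyclicSum k (TorS k Φ)
        (LinearMap.rTensor (TorS k Φ) (rhoOS k Φ) (cutTerm k s (vtxSet T) d)) =
      ∑ f ∈ (dirEdgeFinset T).erase d, jacobiTerm k s d f := by
  rw [cutTerm, cyclicSum_rTensor_wedge k _ fun b => restrVec k s (sideSet (vtxSet T) d b),
    ← Finset.sum_fiberwise ((dirEdgeFinset T).erase d) fun f => sideOf d f.1]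
  refine Finset.sum_congr rfl fun b _ => ?_
  rw [rhoOS_restrVec k s (isSubtree_sideSet hd b), edgesIn_sideSet hd, TensorProduct.sum_tmul,
    map_sum, Finset.smul_sum]
  refine Finset.sum_congr rfl fun f hf => ?_
  obtain ⟨-, rfl⟩ := Finset.mem_filter.1 hf
  rfl

theorem sideSet_sideSet_far {d f : List ℕ × List ℕ} (hd : DirEdge T d.1 d.2)
    (hf : DirEdge T f.1 f.2) (hne : f ≠ d) :
    sideSet (sideSet (vtxSet T) d (sideOf d f.1)) f (!sideOf f d.1) =
      sideSet (vtxSet T) f (!sideOf f d.1) := by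
  ext c
  simp only [sideSet, Set.mem_sep_iff, Bool.eq_not]
  refine ⟨fun ⟨⟨hc, _⟩, h⟩ => ⟨hc, h⟩, fun ⟨hc, h⟩ => ⟨⟨hc, ?_⟩, h⟩⟩
  exact (sideOf_eq_or_sideOf_eq hd hf hne hc).resolve_right h

/-- Deleting `d` and `f` leaves the component between them and their two far sides. -/
theorem jacobiTerm_eq (s : Φ.F T) {d f : List ℕ × List ℕ} (hd : DirEdge T d.1 d.2)
    (hf : DirEdge T f.1 f.2) (hne : f ≠ d) :
    jacobiTerm k s d f = (sideSign (sideOf d f.1) * sideSign (sideOf f d.1)) •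
      cyclicSum k (TorS k Φ)
        (wedge k
            (restrVec k s (sideSet (sideSet (vtxSet T) d (sideOf d f.1)) f (sideOf f d.1)))
            (restrVec k s (sideSet (vtxSet T) f !sideOf f d.1)) ⊗ₜ[k]
          restrVec k s (sideSet (vtxSet T) d !sideOf d f.1)) := by
  rw [jacobiTerm, cutTerm, cyclicSum_wedge_tmul_eq_smul k
      (fun b => restrVec k s (sideSet (sideSet (vtxSet T) d (sideOf d f.1)) f b)) _ (sideOf f d.1),
    sideSet_sideSet_far hd hf hne, mul_smul]

theorem sideSet_comm (S : Set (List ℕ)) (d f : List ℕ × List ℕ) (b b' : Bool) :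
    sideSet (sideSet S d b) f b' = sideSet (sideSet S f b') d b := by
  ext c
  exact and_right_comm

theorem jacobiTerm_add_jacobiTerm_swap (s : Φ.F T) {d f : List ℕ × List ℕ}
    (hd : DirEdge T d.1 d.2) (hf : DirEdge T f.1 f.2) (hne : f ≠ d) :
    jacobiTerm k s d f + jacobiTerm k s f d = 0 := by
  rw [jacobiTerm_eq k s hd hf hne, jacobiTerm_eq k s hf hd hne.symm, sideSet_comm, mul_comm]
  exact smul_cyclicSum_wedge_tmul_add_swap k _ _ _ _

theorem sum_jacobiTerm_eq_zero (s : Φ.F T) :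
    ∑ d ∈ dirEdgeFinset T, ∑ f ∈ (dirEdgeFinset T).erase d, jacobiTerm k s d f = 0 := by
  rw [Finset.sum_sigma']
  refine Finset.sum_involution (fun p _ => ⟨p.2, p.1⟩) (fun p hp => ?_) (fun p hp _ h => ?_)
    (fun p hp => ?_) fun _ _ => rfl
  all_goals simp only [Finset.mem_sigma, Finset.mem_erase] at hp ⊢
  · exact jacobiTerm_add_jacobiTerm_swap k s (mem_dirEdgeFinset.1 hp.1)
      (mem_dirEdgeFinset.1 hp.2.2) hp.2.1
  · exact hp.2.1 (congrArg Sigma.fst h)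
  · exact ⟨hp.2.2, hp.2.1.symm, hp.1⟩

end Classes

/-- For every oriented tree-structure `Φ`, the above map is a Lie
cobracket on `T_or(Φ)`. -/
theorem rhoOS_isLieCobracket : IsLieCobracket (rhoOS k Φ) := by
  refine ⟨TorS.hom_ext fun T s => ?_, TorS.hom_ext fun T s => ?_⟩
  · change tau2 k (TorS k Φ) (rhoOS k Φ _) = -rhoOS k Φ _
    rw [rhoOS_restrVec_vtxSet]
    exact tau2_sum_wedge k _ _ _
  · calc cyclicSum k (TorS k Φ) (LinearMap.rTensor (TorS k Φ) (rhoOS k Φ)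
          (rhoOS k Φ (restrVec k s (vtxSet T))))
        = ∑ d ∈ dirEdgeFinset T, ∑ f ∈ (dirEdgeFinset T).erase d, jacobiTerm k s d f := by
          rw [rhoOS_restrVec_vtxSet, map_sum, map_sum]
          exact Finset.sum_congr rfl fun d hd =>
            cyclicSum_rTensor_cutTerm k s (mem_dirEdgeFinset.1 hd)
      _ = 0 := sum_jacobiTerm_eq_zero k s

end
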